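/- Let α ∈ (0,1) be irrational with continued fraction expansion α = [a_1,a_2,a_3,...], and suppose limsup_{n→∞} a_n ≥ 3. Then for every λ ∈ ℝ with λ ≠ 0, every θ ∈ [0,1), and every E ∈ ℂ, the only square-summable function u : ℤ → ℂ satisfying u(n+1) + u(n−1) + λ v_{α,θ}(n) u(n) = E u(n) for all n ∈ ℤ is u ≡ 0. -/

import Mathlib

/-!
The potential is `v(k) = ⌊(k+1)α + θ⌋ - ⌊kα + θ⌋` (`sturmian_eq_pot`), so its almost-periods are
read off from the floor function. If `q` is a convergent denominator with numerator `p`, call `k`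
a defect when `⌊(k+q)α + θ⌋ ≠ ⌊kα + θ⌋ + p`. The best-approximation property of convergents shows
that distinct defects are at distance at least the next denominator (`defect_separated`), and that
the transfer matrix over any window of length `q` starting at a non-defect has the trace of the
standard word of length `q`, whatever the phase `θ` (`trace_pot_window`).

*Bounded traces.* The traces of the standard words obey the Fricke–Vogt invariant (`invariant`)
and a Chebyshev recursion. Once they escape, all later traces exceed `2` in modulus
(`Escapes.two_lt`); if they never escape they are bounded by `6 + |λ|` (`trace_bound`). Escape is
excluded at an eigenvalue `E` (`not_escapes`): cutting an `ℓ²` solution to a window of length `q`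
and closing it up to a cycle gives an approximate eigenvector of a Hermitian matrix, hence energies
arbitrarily close to `E` at which the trace is exactly `2` (`exists_trace_two_near`). As escape is
an open condition on `E`, this is a contradiction.

*Gordon's argument.* If `a_n ≥ 3`, the denominator following `q` exceeds `3q`, so at most one
defect lies in `[1 - 2q, q + 1]`. Therefore the potential has a square of period `q` either
starting at `1` or ending at `0`. By the Cayley–Hamilton theorem (`gordon_two`) and the trace bound,
`u 0` and `u 1` are bounded by a constant times values of `u` at distance at least `q - 1` from the
origin (`gordon_step`). Since `a_n ≥ 3` for infinitely many `n` and `u` decays, `u 0 = u 1 = 0`,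
and so `u = 0`.
-/

/-- Partial quotients of the continued fraction expansion of `α ∈ (0,1)`:
`cfa α n = a_n` for `n ≥ 1`, computed via the Gauss map. -/
noncomputable def cfa (α : ℝ) (n : ℕ) : ℕ :=
  ⌊((fun x : ℝ => Int.fract x⁻¹)^[n - 1] α)⁻¹⌋₊

/-- The standard Sturmian words, with index shifted by one:
`sw α (n+1)` is the word `s_n` of the paper (so `sw α 0 = s₋₁ = 1`, `sw α 1 = s₀ = 0`,
`sw α 2 = s₁ = s₀^(a₁-1) s₋₁`, and `s_n = s_{n-1}^{a_n} s_{n-2}` for `n ≥ 2`).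
The letter `1` is encoded by `true` and `0` by `false`. -/
noncomputable def sw (α : ℝ) : ℕ → List Bool
  | 0 => [true]
  | 1 => [false]
  | 2 => (List.replicate (cfa α 1 - 1) [false]).flatten ++ [true]
  | n + 3 => (List.replicate (cfa α (n + 2)) (sw α (n + 2))).flatten ++ sw α (n + 1)

/-- Denominators of the rational approximants: `q₀ = 1`, `q₁ = a₁`, `qₙ = aₙ q_{n-1} + q_{n-2}`. -/
noncomputable def qden (α : ℝ) : ℕ → ℕ
  | 0 => 1
  | 1 => cfa α 1
  | n + 2 => cfa α (n + 2) * qden α (n + 1) + qden α n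

open scoped Classical in
/-- The Sturmian potential `v_{α,θ}(n) = χ_{[1-α,1)}(nα + θ mod 1)`, with value `1`
encoded by `true` and `0` by `false` (note `Int.fract x < 1` always). -/
noncomputable def sturmian (α θ : ℝ) (n : ℤ) : Bool :=
  if 1 - α ≤ Int.fract ((n : ℝ) * α + θ) then true else false

/-- An `(n,α)`-partition of a two-sided sequence `f : ℤ → Bool`, given by the
break points `d : ℤ → ℤ` (interval `I_j = {d j, …, d (j+1) - 1}`) and blocks
`z : ℤ → List Bool`: the `d j` are strictly increasing, `0 ∈ I₀`, each block is
`s_n = sw α (n+1)` or `s_{n-1} = sw α n`, consecutive intervals are adjacent with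
`I_j` of length `(z j).length`, and `f` restricted to `I_j` spells the word `z j`. -/
def IsNPartition (α : ℝ) (n : ℕ) (f : ℤ → Bool) (d : ℤ → ℤ) (z : ℤ → List Bool) : Prop :=
  StrictMono d ∧
  (d 0 ≤ 0 ∧ 0 < d 1) ∧
  (∀ j : ℤ, z j = sw α (n + 1) ∨ z j = sw α n) ∧
  (∀ j : ℤ, d (j + 1) = d j + (z j).length) ∧
  (∀ j : ℤ, z j = (List.range (z j).length).map fun k => f (d j + (k : ℤ)))

/-- The finite word `x` occurs in the two-sided sequence `v` adjacent to `i`: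
either `x = v_i v_{i+1} … v_{i+l-1}` or `x = v_{i-l+1} … v_{i-1} v_i`. -/
def AdjacentTo (v : ℤ → Bool) (x : List Bool) (i : ℤ) : Prop :=
  x = ((List.range x.length).map fun k => v (i + (k : ℤ))) ∨
  x = ((List.range x.length).map fun k => v (i - (x.length : ℤ) + 1 + (k : ℤ)))

/-! ### Continued fractions -/

/-- The orbit of `α` under the Gauss map. -/
noncomputable def gaussOrbit (α : ℝ) (n : ℕ) : ℝ := (fun x : ℝ => Int.fract x⁻¹)^[n] α

/-- Denominators of the convergents with index shifted by one: `cfQ α n = q_{n-1}`,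
starting from `q₋₁ = 0`, `q₀ = 1`. -/
noncomputable def cfQ (α : ℝ) : ℕ → ℤ
  | 0 => 0
  | 1 => 1
  | n + 2 => cfa α (n + 1) * cfQ α (n + 1) + cfQ α n

/-- Numerators of the convergents with index shifted by one: `cfP α n = p_{n-1}`,
starting from `p₋₁ = 1`, `p₀ = 0`. -/
noncomputable def cfP (α : ℝ) : ℕ → ℤ
  | 0 => 1
  | 1 => 0
  | n + 2 => cfa α (n + 1) * cfP α (n + 1) + cfP α n

/-- The signed error `q_{n-1} α - p_{n-1}`. -/
noncomputable def cfD (α : ℝ) (n : ℕ) : ℝ := cfQ α n * α - cfP α n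

lemma gaussOrbit_succ (α : ℝ) (n : ℕ) :
    gaussOrbit α (n + 1) = Int.fract (gaussOrbit α n)⁻¹ := by
  unfold gaussOrbit
  rw [Function.iterate_succ_apply']

lemma cfa_succ (α : ℝ) (n : ℕ) : cfa α (n + 1) = ⌊(gaussOrbit α n)⁻¹⌋₊ := rfl

section CF

variable {α : ℝ}

lemma gaussOrbit_irrational (hirr : Irrational α) (n : ℕ) : Irrational (gaussOrbit α n) := by
  induction n with
  | zero => exact hirr
  | succ n ih =>
    rw [gaussOrbit_succ]
    have h := (irrational_inv_iff.2 ih)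
    unfold Int.fract
    exact h.sub_intCast _

lemma gaussOrbit_pos (hα0 : 0 < α) (hirr : Irrational α) (n : ℕ) : 0 < gaussOrbit α n := by
  cases n with
  | zero => exact hα0
  | succ n =>
    have h := gaussOrbit_irrational hirr (n + 1)
    rw [gaussOrbit_succ] at h ⊢
    exact lt_of_le_of_ne (Int.fract_nonneg _) (Ne.symm h.ne_zero)

lemma gaussOrbit_lt_one (hα1 : α < 1) (n : ℕ) : gaussOrbit α n < 1 := by
  cases n with
  | zero => exact hα1
  | succ n => rw [gaussOrbit_succ]; exact Int.fract_lt_one _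

lemma cfa_pos (hα0 : 0 < α) (hα1 : α < 1) (hirr : Irrational α) (n : ℕ) :
    1 ≤ cfa α (n + 1) := by
  rw [cfa_succ]
  apply Nat.le_floor
  have h0 := gaussOrbit_pos hα0 hirr n
  have h1 := gaussOrbit_lt_one hα1 n
  simpa using (one_le_inv₀ h0).2 h1.le

lemma cfa_cast (hα0 : 0 < α) (hirr : Irrational α) (n : ℕ) :
    (cfa α (n + 1) : ℝ) = (gaussOrbit α n)⁻¹ - gaussOrbit α (n + 1) := by
  rw [cfa_succ, gaussOrbit_succ, Int.fract]
  have h0 := gaussOrbit_pos hα0 hirr n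
  have : ((⌊(gaussOrbit α n)⁻¹⌋₊ : ℤ) : ℝ) = ((⌊(gaussOrbit α n)⁻¹⌋ : ℤ) : ℝ) := by
    rw [Int.natCast_floor_eq_floor (by positivity)]
  push_cast at this
  rw [this]; ring

lemma cfD_succ (hα0 : 0 < α) (hirr : Irrational α) (n : ℕ) :
    cfD α (n + 1) = - gaussOrbit α n * cfD α n := by
  induction n with
  | zero => simp [cfD, cfQ, cfP, gaussOrbit]
  | succ n ih =>
    have h1 : cfD α (n + 2) = cfa α (n + 1) * cfD α (n + 1) + cfD α n := by
      simp only [cfD, cfQ, cfP]; push_cast; ring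
    have h0 := gaussOrbit_pos hα0 hirr n
    rw [h1, cfa_cast hα0 hirr, sub_mul]
    have : (gaussOrbit α n)⁻¹ * cfD α (n + 1) = - cfD α n := by
      rw [ih]; field_simp
    rw [this]; ring

lemma cfD_ne_zero (hα0 : 0 < α) (hirr : Irrational α) (n : ℕ) : cfD α n ≠ 0 := by
  induction n with
  | zero => simp [cfD, cfQ, cfP]
  | succ n ih =>
    rw [cfD_succ hα0 hirr]
    exact mul_ne_zero (neg_ne_zero.2 (gaussOrbit_pos hα0 hirr n).ne') ih

lemma cfD_mul_neg (hα0 : 0 < α) (hirr : Irrational α) (n : ℕ) :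
    cfD α (n + 1) * cfD α n < 0 := by
  rw [cfD_succ hα0 hirr]
  have h0 := gaussOrbit_pos hα0 hirr n
  have := mul_pos h0 (mul_self_pos.2 (cfD_ne_zero hα0 hirr n))
  linarith

lemma abs_cfD_succ_lt (hα0 : 0 < α) (hα1 : α < 1) (hirr : Irrational α) (n : ℕ) :
    |cfD α (n + 1)| < |cfD α n| := by
  rw [cfD_succ hα0 hirr, abs_mul, abs_neg, abs_of_pos (gaussOrbit_pos hα0 hirr n)]
  have := abs_pos.2 (cfD_ne_zero hα0 hirr n)
  have h1 := gaussOrbit_lt_one hα1 n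
  nlinarith

lemma abs_cfD_lt_one (hα0 : 0 < α) (hα1 : α < 1) (hirr : Irrational α) (n : ℕ) :
    |cfD α (n + 1)| < 1 := by
  induction n with
  | zero => simpa [cfD, cfQ, cfP, abs_of_pos hα0] using hα1
  | succ n ih => exact (abs_cfD_succ_lt hα0 hα1 hirr (n + 1)).trans ih

lemma cf_det (α : ℝ) (n : ℕ) :
    cfQ α (n + 1) * cfP α n - cfQ α n * cfP α (n + 1) = (-1) ^ n := by
  induction n with
  | zero => simp [cfQ, cfP]
  | succ n ih =>
    simp only [cfQ, cfP] at ih ⊢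
    rw [pow_succ, ← ih]; ring

lemma cfQ_nonneg (α : ℝ) (n : ℕ) : 0 ≤ cfQ α n ∧ 0 ≤ cfQ α (n + 1) := by
  induction n with
  | zero => simp [cfQ]
  | succ n ih =>
    refine ⟨ih.2, ?_⟩
    rw [cfQ]
    have := ih.1
    have := ih.2
    positivity

lemma cfQ_succ_ge (hα0 : 0 < α) (hα1 : α < 1) (hirr : Irrational α) (n : ℕ) :
    cfQ α (n + 1) + cfQ α n ≤ cfQ α (n + 2) := by
  rw [cfQ]
  have h1 : (1 : ℤ) ≤ cfa α (n + 1) := by exact_mod_cast cfa_pos hα0 hα1 hirr n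
  have := (cfQ_nonneg α n).2
  nlinarith

lemma cfQ_pos (hα0 : 0 < α) (hα1 : α < 1) (hirr : Irrational α) (n : ℕ) :
    1 ≤ cfQ α (n + 1) := by
  induction n with
  | zero => simp [cfQ]
  | succ n ih =>
    have := cfQ_succ_ge hα0 hα1 hirr n
    have := (cfQ_nonneg α n).1
    linarith

lemma cfQ_succ_lt (hα0 : 0 < α) (hα1 : α < 1) (hirr : Irrational α) (n : ℕ) :
    cfQ α (n + 2) < cfQ α (n + 3) := by
  have := cfQ_succ_ge hα0 hα1 hirr (n + 1)
  have := cfQ_pos hα0 hα1 hirr n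
  simp only [add_assoc] at *
  norm_num at *
  linarith

lemma cfQ_ge (hα0 : 0 < α) (hα1 : α < 1) (hirr : Irrational α) (n : ℕ) :
    (n : ℤ) + 1 ≤ cfQ α (n + 2) := by
  induction n with
  | zero => simpa using cfQ_pos hα0 hα1 hirr 1
  | succ n ih =>
    have := cfQ_succ_lt hα0 hα1 hirr n
    push_cast
    have h : cfQ α (n + 1 + 2) = cfQ α (n + 3) := rfl
    linarith

lemma cfQ_mul_abs_cfD_lt_one (hα0 : 0 < α) (hα1 : α < 1) (hirr : Irrational α) (n : ℕ) :
    cfQ α (n + 1) * |cfD α (n + 1)| < 1 := by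
  have hdet : cfQ α (n + 2) * cfD α (n + 1) - cfQ α (n + 1) * cfD α (n + 2)
      = - (-1) ^ (n + 1) := by
    have := cf_det α (n + 1)
    have h2 : ((cfQ α (n + 2) * cfP α (n + 1) - cfQ α (n + 1) * cfP α (n + 2) : ℤ) : ℝ)
      = ((-1) ^ (n + 1) : ℤ) := by exact_mod_cast this
    push_cast at h2
    rw [← h2]
    simp only [cfD]; ring
  have hq1 : (1 : ℝ) ≤ cfQ α (n + 1) := by exact_mod_cast cfQ_pos hα0 hα1 hirr n
  have hq2 : (cfQ α (n + 1) : ℝ) ≤ cfQ α (n + 2) := by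
    have h1 := cfQ_succ_ge hα0 hα1 hirr n
    have h2 := (cfQ_nonneg α n).1
    exact_mod_cast (by linarith : cfQ α (n + 1) ≤ cfQ α (n + 2))
  have hneg := cfD_mul_neg hα0 hirr (n + 1)
  have habs : |cfQ α (n + 2) * cfD α (n + 1) - cfQ α (n + 1) * cfD α (n + 2)| = 1 := by
    rw [hdet]; simp
  -- the two terms have the same sign, so their absolute values add up to `1`
  rcases lt_or_gt_of_ne (cfD_ne_zero hα0 hirr (n + 1)) with h | h
  · have h' : 0 < cfD α (n + 2) := by by_contra hc; push Not at hc; nlinarith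
    rw [abs_of_neg h]
    rw [abs_of_nonpos (by nlinarith)] at habs
    nlinarith
  · have h' : cfD α (n + 2) < 0 := by by_contra hc; push Not at hc; nlinarith
    rw [abs_of_pos h]
    rw [abs_of_nonneg (by nlinarith)] at habs
    nlinarith

lemma cf_coprime (α : ℝ) (n : ℕ) : IsCoprime (cfQ α n) (cfP α n) := by
  have h := cf_det α n
  have h2 : ((-1 : ℤ) ^ n) * (-1) ^ n = 1 := by rw [← mul_pow]; simp
  refine ⟨-(-1) ^ n * cfP α (n + 1), (-1) ^ n * cfQ α (n + 1), ?_⟩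
  calc _ = (-1) ^ n * (cfQ α (n + 1) * cfP α n - cfQ α n * cfP α (n + 1)) := by ring
    _ = 1 := by rw [h, h2]

/-- The law of best approximation: `|m α - l|` is at least `|q_{n-1} α - p_{n-1}|` for
`0 < |m| < q_n`. -/
lemma best_approx (hα0 : 0 < α) (hirr : Irrational α)
    (n : ℕ) (m l : ℤ) (hm : m ≠ 0) (hlt : |m| < cfQ α (n + 1)) :
    |cfD α n| ≤ |m * α - l| := by
  have h := cf_det α n
  have h2 : ((-1 : ℤ) ^ n) * (-1) ^ n = 1 := by rw [← mul_pow]; simp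
  -- coordinates of `(m, l)` in the unimodular basis `(q_n, p_n)`, `(q_{n-1}, p_{n-1})`
  obtain ⟨x, y, hx, hy⟩ : ∃ x y : ℤ, m = x * cfQ α (n + 1) + y * cfQ α n ∧
      l = x * cfP α (n + 1) + y * cfP α n := by
    refine ⟨(-1) ^ n * (m * cfP α n - l * cfQ α n),
      (-1) ^ n * (l * cfQ α (n + 1) - m * cfP α (n + 1)), ?_, ?_⟩
    · calc m = m * ((-1) ^ n * (-1) ^ n) := by rw [h2, mul_one]
        _ = m * ((-1) ^ n * (cfQ α (n + 1) * cfP α n - cfQ α n * cfP α (n + 1))) := by rw [h]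
        _ = _ := by ring
    · calc l = l * ((-1) ^ n * (-1) ^ n) := by rw [h2, mul_one]
        _ = l * ((-1) ^ n * (cfQ α (n + 1) * cfP α n - cfQ α n * cfP α (n + 1))) := by rw [h]
        _ = _ := by ring
  have hD : (m : ℝ) * α - l = x * cfD α (n + 1) + y * cfD α n := by
    rw [hx, hy]; simp only [cfD]; push_cast; ring
  have hQ0 := (cfQ_nonneg α n).1
  have hQ1 := (cfQ_nonneg α n).2
  have hlt' := abs_lt.1 hlt
  have hy0 : y ≠ 0 := by
    rintro rfl
    simp only [zero_mul, add_zero] at hx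
    have : x ≠ 0 := by rintro rfl; simp at hx; exact hm hx
    have h1 : 1 ≤ |x| := Int.one_le_abs this
    rw [hx, abs_mul, abs_of_nonneg hQ1] at hlt
    nlinarith
  have hneg := cfD_mul_neg hα0 hirr n
  have hsign : x * y ≤ 0 := by
    by_contra hc
    push Not at hc
    rcases lt_or_gt_of_ne hy0 with hyn | hyp
    · have : x ≤ -1 := by nlinarith
      nlinarith
    · have : 1 ≤ x := by nlinarith
      nlinarith
  rw [hD]
  have hsR : (x : ℝ) * y ≤ 0 := by exact_mod_cast hsign
  have hy1 : (1 : ℝ) ≤ (y : ℝ) ^ 2 := by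
    have : 1 ≤ y ^ 2 := by have := Int.one_le_abs hy0; rw [← sq_abs]; nlinarith
    exact_mod_cast this
  apply sq_le_sq.1
  have h3 : 0 ≤ (x * y) * (cfD α (n + 1) * cfD α n) := mul_nonneg_of_nonpos_of_nonpos hsR hneg.le
  nlinarith [sq_nonneg (x * cfD α (n + 1)), mul_le_mul_of_nonneg_right hy1 (sq_nonneg (cfD α n))]

end CF

/-! ### The Sturmian sequence as a difference of floors -/

/-- The lower mechanical staircase `⌊k α + θ⌋`. -/
noncomputable def flr (α θ : ℝ) (k : ℤ) : ℤ := ⌊(k : ℝ) * α + θ⌋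

/-- The Sturmian sequence, as the discrete derivative of `flr`. -/
noncomputable def pot (α θ : ℝ) (k : ℤ) : ℤ := flr α θ (k + 1) - flr α θ k

lemma sturmian_eq_pot {α : ℝ} (hα0 : 0 < α) (hα1 : α < 1) (θ : ℝ) (k : ℤ) :
    (if sturmian α θ k then (1 : ℂ) else 0) = ((pot α θ k : ℤ) : ℂ) := by
  have key : ∀ x : ℝ, (1 - α ≤ Int.fract x → ⌊x + α⌋ = ⌊x⌋ + 1) ∧
      (¬ 1 - α ≤ Int.fract x → ⌊x + α⌋ = ⌊x⌋) := by
    intro x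
    have h0 := Int.fract_nonneg x
    have h1 := Int.fract_lt_one x
    have h2 : Int.fract x = x - ⌊x⌋ := rfl
    constructor
    · intro h
      rw [Int.floor_eq_iff]; push_cast; constructor <;> linarith
    · intro h
      rw [Int.floor_eq_iff]; push Not at h; constructor <;> linarith
  have h := key ((k : ℝ) * α + θ)
  have e : ((k + 1 : ℤ) : ℝ) * α + θ = (k : ℝ) * α + θ + α := by push_cast; ring
  unfold sturmian pot flr
  rw [e]
  by_cases hc : 1 - α ≤ Int.fract ((k : ℝ) * α + θ)
  · simp [hc, h.1 hc]
  · simp [hc, h.2 hc]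

/-- If the staircase rises by exactly `p` over a window of length `q`, where `p / q` is a reduced
fraction close to `α`, then on that window it is a staircase of slope `p / q`. -/
lemma flr_eq_rational {α θ : ℝ} {p q s : ℤ} (hq : 0 < q) (hcop : IsCoprime q p)
    (hε : q * |q * α - p| < 1) (hs : flr α θ (s + q) = flr α θ s + p) :
    ∃ j : ℤ, ∀ k, s ≤ k → k ≤ s + q → flr α θ k = (k * p + j) / q := by
  have main : ∀ k l, s ≤ k → k ≤ s + q → s ≤ l → l ≤ s + q →
      q * (flr α θ k - flr α θ l - 1) < (k - l) * p := by
    intro k l hk1 hk2 hl1 hl2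
    have hqR : (0 : ℝ) < q := by exact_mod_cast hq
    have h1 : ((flr α θ k - flr α θ l - 1 : ℤ) : ℝ) < (k - l) * α := by
      have a1 := Int.floor_le ((k : ℝ) * α + θ)
      have a2 := Int.lt_floor_add_one ((l : ℝ) * α + θ)
      unfold flr; push_cast; linarith
    have hd : |((k : ℝ) - l) * (q * α - p)| < 1 := by
      rw [abs_mul]
      refine lt_of_le_of_lt (mul_le_mul_of_nonneg_right ?_ (abs_nonneg _)) hε
      rw [abs_le]
      constructor
      · exact_mod_cast (by linarith : -q ≤ k - l)
      · exact_mod_cast (by linarith : k - l ≤ q)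
    have h2 : ((q * (flr α θ k - flr α θ l - 1) : ℤ) : ℝ) < (((k - l) * p + 1 : ℤ) : ℝ) := by
      have h3 := mul_lt_mul_of_pos_left h1 hqR
      have h4 := (abs_lt.1 hd).2
      push_cast at h3 ⊢
      nlinarith
    have h3 : q * (flr α θ k - flr α θ l - 1) < (k - l) * p + 1 := by exact_mod_cast h2
    refine lt_of_le_of_ne (by linarith) ?_
    intro heq
    -- equality forces `q ∣ k - l`, hence `k = l` or `{k, l} = {s, s + q}`
    have hdvd : q ∣ (k - l) * p := ⟨_, heq.symm⟩
    obtain ⟨c, hc⟩ := hcop.dvd_of_dvd_mul_right hdvd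
    have hc1 : -1 ≤ c := by nlinarith
    have hc2 : c ≤ 1 := by nlinarith
    have hcc : c = -1 ∨ c = 0 ∨ c = 1 := by omega
    have hN : flr α θ k - flr α θ l - 1 = c * p := by
      rw [hc] at heq
      have : q * (flr α θ k - flr α θ l - 1) = q * (c * p) := by rw [heq]; ring
      exact mul_left_cancel₀ hq.ne' this
    rcases hcc with rfl | rfl | rfl
    · have e1 : k = s := by linarith
      have e2 : l = s + q := by linarith
      rw [e1, e2, hs] at hN; linarith
    · have e1 : k = l := by linarith
      rw [e1] at hN; linarith
    · have e1 : k = s + q := by linarith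
      have e2 : l = s := by linarith
      rw [e1, e2, hs] at hN; linarith
  obtain ⟨k₀, hk₀, hmax⟩ := Finset.exists_max_image (Finset.Icc s (s + q))
    (fun k => q * flr α θ k - k * p) ⟨s, by simp [hq.le]⟩
  rw [Finset.mem_Icc] at hk₀
  refine ⟨q * flr α θ k₀ - k₀ * p, fun k hk1 hk2 => ?_⟩
  have a := hmax k (Finset.mem_Icc.2 ⟨hk1, hk2⟩)
  have b := main k₀ k hk₀.1 hk₀.2 hk1 hk2
  symm
  rw [Int.ediv_eq_iff_of_pos hq]
  constructor <;> nlinarith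

/-- Two failures of the period `q_n` of the staircase are at least `q_{n+1}` apart. -/
lemma defect_separated {α : ℝ} (hα0 : 0 < α) (hα1 : α < 1) (hirr : Irrational α) (θ : ℝ)
    (n : ℕ) (k k' : ℤ) (hne : k ≠ k')
    (hk : flr α θ (k + cfQ α (n + 1)) ≠ flr α θ k + cfP α (n + 1))
    (hk' : flr α θ (k' + cfQ α (n + 1)) ≠ flr α θ k' + cfP α (n + 1)) :
    cfQ α (n + 2) ≤ |k - k'| := by
  by_contra hlt
  push Not at hlt
  have hb := best_approx hα0 hirr (n + 1) (k - k')
    (flr α θ k - flr α θ k') (sub_ne_zero.2 hne) hlt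
  have hD1 := abs_cfD_lt_one hα0 hα1 hirr n
  set ε := cfD α (n + 1) with hε
  have hfl : ∀ k : ℤ, flr α θ (k + cfQ α (n + 1)) ≠ flr α θ k + cfP α (n + 1) →
      ⌊(k : ℝ) * α + θ + ε⌋ ≠ ⌊(k : ℝ) * α + θ⌋ := by
    intro k hk h
    apply hk
    unfold flr
    rw [← h, ← Int.floor_add_intCast]
    congr 1
    rw [hε, cfD]; push_cast; ring
  have h1 := hfl k hk
  have h2 := hfl k' hk'
  have key : ∀ x : ℝ, ⌊x + ε⌋ ≠ ⌊x⌋ →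
      (0 < ε → 1 - ε ≤ x - ⌊x⌋) ∧ (ε ≤ 0 → x - ⌊x⌋ < - ε) := by
    intro x hx
    have a1 := Int.floor_le x
    have a2 := Int.lt_floor_add_one x
    constructor
    · intro h; by_contra hc; push Not at hc
      exact hx (by rw [Int.floor_eq_iff]; constructor <;> linarith)
    · intro h; by_contra hc; push Not at hc
      exact hx (by rw [Int.floor_eq_iff]; constructor <;> linarith)
  have k1 := key _ h1
  have k2 := key _ h2
  have b1 := Int.floor_le ((k : ℝ) * α + θ)
  have b2 := Int.lt_floor_add_one ((k : ℝ) * α + θ)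
  have b3 := Int.floor_le ((k' : ℝ) * α + θ)
  have b4 := Int.lt_floor_add_one ((k' : ℝ) * α + θ)
  unfold flr at hb
  push_cast at hb
  refine absurd hb (not_le.2 ?_)
  rcases lt_or_ge 0 ε with h | h
  · have c1 := k1.1 h
    have c2 := k2.1 h
    rw [abs_of_pos h, abs_lt]
    constructor <;> linarith
  · have c1 := k1.2 h
    have c2 := k2.2 h
    rw [abs_of_nonpos h, abs_lt]
    constructor <;> linarith

/-- For phase `θ = 0` the period `q_n` has no failure in `[1, q_{n+1})`. -/
lemma flr_zero_periodic {α : ℝ} (hα0 : 0 < α) (hα1 : α < 1) (hirr : Irrational α)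
    (n : ℕ) (k : ℤ) (hk1 : 1 ≤ k) (hk2 : k < cfQ α (n + 2)) :
    flr α 0 (k + cfQ α (n + 1)) = flr α 0 k + cfP α (n + 1) := by
  have hD1 := abs_cfD_lt_one hα0 hα1 hirr n
  have hk : |k| < cfQ α (n + 1 + 1) := by rw [abs_of_pos (by omega)]; exact hk2
  have hb0 := best_approx hα0 hirr (n + 1) k (⌊(k : ℝ) * α⌋) (by omega) hk
  have hb1 := best_approx hα0 hirr (n + 1) k (⌊(k : ℝ) * α⌋ + 1) (by omega) hk
  have hQ := cfQ_pos hα0 hα1 hirr n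
  -- by irrationality the distance to the next integer is not equal to the error term
  have hne : (k : ℝ) * α + cfD α (n + 1) ≠ (⌊(k : ℝ) * α⌋ + 1 : ℤ) := by
    intro h
    have : ((k + cfQ α (n + 1) : ℤ) : ℝ) * α
        = ((⌊(k : ℝ) * α⌋ + 1 + cfP α (n + 1) : ℤ) : ℝ) := by
      push_cast
      push_cast at h
      rw [← h, cfD]; ring
    exact (hirr.intCast_mul (by omega : k + cfQ α (n + 1) ≠ 0)).ne_int _ this
  have a1 := Int.floor_le ((k : ℝ) * α)
  have a2 := Int.lt_floor_add_one ((k : ℝ) * α)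
  unfold flr
  have e : ((k + cfQ α (n + 1) : ℤ) : ℝ) * α + 0
      = (k : ℝ) * α + cfD α (n + 1) + (cfP α (n + 1) : ℤ) := by
    rw [cfD]; push_cast; ring
  rw [e, Int.floor_add_intCast, add_zero]
  congr 1
  set ε := cfD α (n + 1) with hε
  push_cast at hb1 hne
  rw [abs_of_nonneg (by linarith : 0 ≤ (k : ℝ) * α - ⌊(k : ℝ) * α⌋)] at hb0
  rw [abs_of_nonpos (by linarith : (k : ℝ) * α - (⌊(k : ℝ) * α⌋ + 1) ≤ 0)] at hb1
  rw [Int.floor_eq_iff]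
  have l1 := neg_abs_le ε
  have l2 := le_abs_self ε
  refine ⟨by linarith, lt_of_le_of_ne (by linarith) hne⟩

/-! ### Transfer matrices -/

open Matrix in
/-- The one-step transfer matrix at a site where the potential is `lam * b`. -/
def tm (lam E : ℂ) (b : ℤ) : Matrix (Fin 2) (Fin 2) ℂ := !![E - lam * b, -1; 1, 0]

/-- The transfer matrix over the `m` sites `s, s + 1, …, s + m - 1`. -/
def prodT (lam E : ℂ) (g : ℤ → ℤ) (s : ℤ) : ℕ → Matrix (Fin 2) (Fin 2) ℂ
  | 0 => 1
  | m + 1 => tm lam E (g (s + m)) * prodT lam E g s m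

section Transfer

open Matrix

variable {lam E : ℂ}

lemma det_tm (lam E : ℂ) (b : ℤ) : (tm lam E b).det = 1 := by
  simp [tm, Matrix.det_fin_two]

lemma det_prodT (g : ℤ → ℤ) (s : ℤ) (m : ℕ) : (prodT lam E g s m).det = 1 := by
  induction m with
  | zero => simp [prodT]
  | succ m ih => rw [prodT, Matrix.det_mul, ih, det_tm, one_mul]

lemma prodT_congr {g h : ℤ → ℤ} {s s' : ℤ} {m : ℕ}
    (H : ∀ i : ℕ, i < m → g (s + i) = h (s' + i)) :
    prodT lam E g s m = prodT lam E h s' m := by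
  induction m with
  | zero => rfl
  | succ m ih =>
    rw [prodT, prodT, H m (Nat.lt_succ_self m), ih (fun i hi => H i (by omega))]

lemma prodT_add (g : ℤ → ℤ) (s : ℤ) (m l : ℕ) :
    prodT lam E g s (m + l) = prodT lam E g (s + m) l * prodT lam E g s m := by
  induction l with
  | zero => simp [prodT]
  | succ l ih =>
    rw [← add_assoc, prodT, ih, prodT, Matrix.mul_assoc]
    congr 3; push_cast; ring_nf

lemma prodT_succ' (g : ℤ → ℤ) (s : ℤ) (m : ℕ) :
    prodT lam E g s (m + 1) = prodT lam E g (s + 1) m * tm lam E (g s) := by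
  rw [add_comm m 1, prodT_add]
  simp [prodT]

/-- A word spelled as `a` copies of its prefix of length `m`. -/
lemma prodT_pow (g : ℤ → ℤ) (s : ℤ) (m a : ℕ)
    (H : ∀ i : ℕ, i + m < a * m → g (s + i + m) = g (s + i)) :
    prodT lam E g s (a * m) = prodT lam E g s m ^ a := by
  induction a with
  | zero => simp [prodT]
  | succ a ih =>
    have e : (a + 1) * m = m + a * m := by ring
    rw [e, prodT_add, pow_succ, ← ih (fun i hi => H i (by rw [e]; omega))]
    congr 1
    apply prodT_congr
    intro i hi
    have := H i (by rw [e]; omega)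
    rw [← this]; congr 1; ring

lemma trace_prodT_shift_one (g : ℤ → ℤ) (s : ℤ) (m : ℕ) (hg : g (s + m) = g s) :
    (prodT lam E g (s + 1) m).trace = (prodT lam E g s m).trace := by
  cases m with
  | zero => rfl
  | succ m =>
    rw [prodT_succ' g s m, Matrix.trace_mul_comm, prodT, ← hg]
    congr 4; push_cast; ring

lemma trace_prodT_shift (g : ℤ → ℤ) (m : ℕ) (hg : ∀ s, g (s + m) = g s) (s : ℤ) :
    (prodT lam E g s m).trace = (prodT lam E g 0 m).trace := by
  induction s using Int.induction_on with
  | zero => rfl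
  | succ i ih => rw [trace_prodT_shift_one _ _ _ (hg _), ih]
  | pred i ih =>
    rw [← ih, ← trace_prodT_shift_one g (-(i : ℤ) - 1) m (hg _)]
    congr 2; ring

/-- The Sturmian trace over a window on which the staircase rises by `p` depends on `p / q` only. -/
lemma trace_window {α θ : ℝ} {p s : ℤ} {q : ℕ} (hq : 0 < q) (hcop : IsCoprime (q : ℤ) p)
    (hε : q * |q * α - p| < 1) (hs : flr α θ (s + q) = flr α θ s + p) :
    (prodT lam E (pot α θ) s q).trace
      = (prodT lam E (fun k => ((k + 1) * p) / q - (k * p) / q) 0 q).trace := by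
  obtain ⟨j, hj⟩ := flr_eq_rational (q := (q : ℤ)) (by exact_mod_cast hq) hcop
    (by exact_mod_cast hε) hs
  have hq' : (q : ℤ) ≠ 0 := by exact_mod_cast hq.ne'
  obtain ⟨x, y, hxy⟩ := hcop
  -- since `p` is invertible modulo `q`, the offset `j` is a translation by `j * y`
  have hw : ∀ k : ℤ, (k * p + j) / q = ((k + j * y) * p) / q + j * x := by
    intro k
    rw [← Int.add_mul_ediv_right _ _ hq']
    congr 1
    have : j = j * (x * q + y * p) := by rw [hxy, mul_one]
    linear_combination this
  have h1 : prodT lam E (pot α θ) s q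
      = prodT lam E (fun k => ((k + 1) * p) / q - (k * p) / q) (s + j * y) q := by
    apply prodT_congr
    intro i hi
    have hi' : (i : ℤ) < q := by exact_mod_cast hi
    unfold pot
    rw [hj _ (by omega) (by omega), hj _ (by omega) (by omega), hw, hw]
    have e1 : s + (i : ℤ) + 1 + j * y = s + j * y + i + 1 := by ring
    have e2 : s + (i : ℤ) + j * y = s + j * y + i := by ring
    rw [e1, e2]; ring
  rw [h1, trace_prodT_shift]
  intro k
  have e1 : (k + q + 1) * p = (k + 1) * p + p * q := by ring
  have e2 : (k + q) * p = k * p + p * q := by ring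
  rw [e1, e2, Int.add_mul_ediv_right _ _ hq', Int.add_mul_ediv_right _ _ hq']
  ring

lemma prodT_mulVec {g : ℤ → ℤ} {u : ℤ → ℂ} {s : ℤ} {m : ℕ}
    (hu : ∀ i : ℕ, i < m → u (s + i + 1) + u (s + i - 1) + lam * g (s + i) * u (s + i)
      = E * u (s + i)) :
    prodT lam E g s m *ᵥ ![u s, u (s - 1)] = ![u (s + m), u (s + m - 1)] := by
  induction m with
  | zero => simp [prodT]
  | succ m ih =>
    rw [prodT, ← Matrix.mulVec_mulVec, ih (fun i hi => hu i (by omega))]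
    have h := hu m (Nat.lt_succ_self m)
    ext i
    fin_cases i
    · simp [tm, Matrix.mulVec, dotProduct, Fin.sum_univ_two]
      rw [← add_assoc]
      linear_combination -h
    · simp [tm, Matrix.mulVec, dotProduct, Fin.sum_univ_two]
      congr 1; ring

lemma cayley_two (X : Matrix (Fin 2) (Fin 2) ℂ) (hX : X.det = 1) :
    X * X = X.trace • X - 1 := by
  rw [Matrix.det_fin_two] at hX
  ext i j
  fin_cases i <;> fin_cases j <;>
    simp [Matrix.mul_apply, Fin.sum_univ_two, Matrix.trace_fin_two] <;>
    first | ring1 | linear_combination -hX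

/-- Two consecutive copies of the same word: the values of a solution at the three endpoints
are linked by the trace. -/
lemma gordon_two {g : ℤ → ℤ} {u : ℤ → ℂ}
    (hu : ∀ k : ℤ, u (k + 1) + u (k - 1) + lam * g k * u k = E * u k)
    (s : ℤ) (m : ℕ) (hper : ∀ i : ℕ, i < m → g (s + m + i) = g (s + i)) :
    u (s + 2 * m) = (prodT lam E g s m).trace * u (s + m) - u s ∧
    u (s + 2 * m - 1) = (prodT lam E g s m).trace * u (s + m - 1) - u (s - 1) := by
  set X := prodT lam E g s m with hX
  have h1 : X *ᵥ ![u s, u (s - 1)] = ![u (s + m), u (s + m - 1)] :=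
    prodT_mulVec (fun i _ => hu _)
  have h2 : X *ᵥ ![u (s + m), u (s + m - 1)] = ![u (s + 2 * m), u (s + 2 * m - 1)] := by
    rw [hX, ← prodT_congr (s := s + m) hper, prodT_mulVec (fun i _ => hu _)]
    congr 2 <;> [skip; congr 1] <;> ring_nf
  have h3 : ![u (s + 2 * m), u (s + 2 * m - 1)]
      = X.trace • ![u (s + m), u (s + m - 1)] - ![u s, u (s - 1)] := by
    rw [← h2, ← h1, Matrix.mulVec_mulVec, cayley_two X (det_prodT _ _ _), Matrix.sub_mulVec,
      Matrix.smul_mulVec, Matrix.one_mulVec]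
  exact ⟨by simpa using congrFun h3 0, by simpa using congrFun h3 1⟩

end Transfer

/-! ### The trace map -/

/-- Transfer matrices of the standard words, with index shifted by one. The first one is
`T₁ T₀⁻¹`, which makes the recursion hold from the start. -/
noncomputable def stdM (α : ℝ) (lam E : ℂ) : ℕ → Matrix (Fin 2) (Fin 2) ℂ
  | 0 => !![1, -lam; 0, 1]
  | 1 => tm lam E 0
  | n + 2 => stdM α lam E n * stdM α lam E (n + 1) ^ cfa α (n + 1)

/-- The trace `x_{n-1}` of the `n`-th standard transfer matrix. -/
noncomputable def trX (α : ℝ) (lam E : ℂ) (n : ℕ) : ℂ := (stdM α lam E n).trace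

/-- The mixed traces `tr (M_{n-1} M_n ^ p)`. -/
noncomputable def trT (α : ℝ) (lam E : ℂ) (n p : ℕ) : ℂ :=
  (stdM α lam E n * stdM α lam E (n + 1) ^ p).trace

/-- The open condition on two consecutive levels from which the traces escape. -/
def Escapes (α : ℝ) (lam E : ℂ) (n : ℕ) : Prop :=
  2 < ‖trX α lam E (n + 1)‖ ∧ 2 < ‖trT α lam E n 1‖ ∧ ‖trX α lam E n‖ < ‖trT α lam E n 1‖

section TraceMap

variable {α : ℝ} {lam E : ℂ}

lemma det_stdM (n : ℕ) : (stdM α lam E n).det = 1 ∧ (stdM α lam E (n + 1)).det = 1 := by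
  induction n with
  | zero => exact ⟨by simp [stdM, Matrix.det_fin_two], det_tm _ _ _⟩
  | succ n ih => exact ⟨ih.2, by rw [stdM, Matrix.det_mul, Matrix.det_pow, ih.1, ih.2]; simp⟩

lemma trT_zero (n : ℕ) : trT α lam E n 0 = trX α lam E n := by simp [trT, trX]

lemma trT_rec (n p : ℕ) :
    trT α lam E n (p + 2) = trX α lam E (n + 1) * trT α lam E n (p + 1) - trT α lam E n p := by
  have h := cayley_two (stdM α lam E (n + 1)) (det_stdM n).2
  have e : stdM α lam E n * stdM α lam E (n + 1) ^ (p + 2)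
      = trX α lam E (n + 1) • (stdM α lam E n * stdM α lam E (n + 1) ^ (p + 1))
        - stdM α lam E n * stdM α lam E (n + 1) ^ p := by
    rw [pow_add, pow_two, h, Matrix.mul_sub, Matrix.mul_one, Matrix.mul_smul, Matrix.mul_sub,
      Matrix.mul_smul, pow_succ]
    rfl
  unfold trT
  rw [e, Matrix.trace_sub, Matrix.trace_smul, smul_eq_mul]

lemma trX_add_two (n : ℕ) : trX α lam E (n + 2) = trT α lam E n (cfa α (n + 1)) := rfl

lemma trT_succ_one (n : ℕ) :
    trT α lam E (n + 1) 1 = trT α lam E n (cfa α (n + 1) + 1) := by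
  unfold trT
  rw [pow_one, show stdM α lam E (n + 1 + 1)
    = stdM α lam E n * stdM α lam E (n + 1) ^ cfa α (n + 1) from rfl, Matrix.trace_mul_comm,
    Matrix.mul_assoc, ← pow_succ]

/-- The Fricke–Vogt invariant. -/
lemma invariant (n : ℕ) :
    trX α lam E (n + 1) ^ 2 + trX α lam E n ^ 2 + trT α lam E n 1 ^ 2
      - trX α lam E (n + 1) * trX α lam E n * trT α lam E n 1 = 4 + lam ^ 2 := by
  have step : ∀ n p : ℕ, trX α lam E (n + 1) ^ 2 + trT α lam E n p ^ 2
      + trT α lam E n (p + 1) ^ 2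
      - trX α lam E (n + 1) * trT α lam E n p * trT α lam E n (p + 1)
      = trX α lam E (n + 1) ^ 2 + trX α lam E n ^ 2 + trT α lam E n 1 ^ 2
      - trX α lam E (n + 1) * trX α lam E n * trT α lam E n 1 := by
    intro n p
    induction p with
    | zero => rw [trT_zero]
    | succ p ih => rw [← ih, trT_rec]; ring
  induction n with
  | zero =>
    simp [trX, trT, stdM, tm, Matrix.trace_fin_two]
    ring
  | succ n ih =>
    rw [← ih, ← step n (cfa α (n + 1)), trT_succ_one, trX_add_two]
    ring

lemma cheb_growth {X : ℂ} {t : ℕ → ℂ} (hX : 2 < ‖X‖)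
    (ht : ∀ p, t (p + 2) = X * t (p + 1) - t p) (p : ℕ) (h : ‖t p‖ < ‖t (p + 1)‖) :
    ‖t (p + 1)‖ < ‖t (p + 2)‖ := by
  have h1 : ‖X * t (p + 1)‖ - ‖t p‖ ≤ ‖t (p + 2)‖ := by
    rw [ht]; exact norm_sub_norm_le _ _
  rw [norm_mul] at h1
  nlinarith [norm_nonneg (t p)]

lemma escapes_succ_of {n : ℕ} {a : ℕ} (ha : cfa α (n + 1) = a + 1)
    (hX : 2 < ‖trX α lam E (n + 1)‖)
    (h2 : 2 < ‖trT α lam E n (a + 1)‖)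
    (hlt : ‖trT α lam E n a‖ < ‖trT α lam E n (a + 1)‖) : Escapes α lam E (n + 1) := by
  have hg := cheb_growth hX (trT_rec n) a hlt
  unfold Escapes
  rw [trX_add_two, trT_succ_one, ha]
  refine ⟨h2, h2.trans hg, ?_⟩
  have h1 : ‖trX α lam E (n + 1) * trT α lam E n (a + 1)‖ - ‖trT α lam E n a‖
      ≤ ‖trT α lam E n (a + 2)‖ := by
    rw [trT_rec]; exact norm_sub_norm_le _ _
  rw [norm_mul] at h1
  change _ < ‖trT α lam E n (a + 2)‖
  nlinarith

/-- An escape propagates: the mixed traces obey a Chebyshev recursion and grow in modulus. -/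
lemma Escapes.succ (hα0 : 0 < α) (hα1 : α < 1) (hirr : Irrational α) {n : ℕ}
    (h : Escapes α lam E n) : Escapes α lam E (n + 1) := by
  obtain ⟨a, ha⟩ : ∃ a, cfa α (n + 1) = a + 1 :=
    ⟨cfa α (n + 1) - 1, by have := cfa_pos hα0 hα1 hirr n; omega⟩
  obtain ⟨hX, h1, h0⟩ := h
  have key : ∀ p, 2 < ‖trT α lam E n (p + 1)‖ ∧
      ‖trT α lam E n p‖ < ‖trT α lam E n (p + 1)‖ := by
    intro p
    induction p with
    | zero => exact ⟨h1, by rw [trT_zero]; exact h0⟩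
    | succ p ih =>
      have := cheb_growth hX (trT_rec n) p ih.2
      exact ⟨ih.1.trans this, this⟩
  exact escapes_succ_of ha hX (key a).1 (key a).2

lemma Escapes.two_lt (hα0 : 0 < α) (hα1 : α < 1) (hirr : Irrational α) {n m : ℕ}
    (h : Escapes α lam E n) (hnm : n ≤ m) : 2 < ‖trX α lam E (m + 1)‖ := by
  have : Escapes α lam E m := by
    induction hnm with
    | refl => exact h
    | step _ ih => exact ih.succ hα0 hα1 hirr
  exact this.1

/-- Without escape, no two consecutive traces exceed `2` in modulus. At the first such pair the
mixed traces would have to increase, which is an escape. -/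
lemma not_two_large (hα0 : 0 < α) (hα1 : α < 1) (hirr : Irrational α)
    (hE : ∀ n, ¬ Escapes α lam E n) (n : ℕ) :
    ¬ (2 < ‖trX α lam E n‖ ∧ 2 < ‖trX α lam E (n + 1)‖) := by
  induction n with
  | zero =>
    rintro ⟨h, -⟩
    norm_num [trX, stdM, Matrix.trace_fin_two] at h
  | succ n ih =>
    rintro ⟨hX, hY⟩
    have h0 : ‖trX α lam E n‖ ≤ 2 := by
      by_contra hc; push Not at hc; exact ih ⟨hc, hX⟩
    obtain ⟨a, ha⟩ : ∃ a, cfa α (n + 1) = a + 1 :=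
      ⟨cfa α (n + 1) - 1, by have := cfa_pos hα0 hα1 hirr n; omega⟩
    have key : ∀ p, 2 < ‖trT α lam E n (p + 1)‖ →
        ‖trT α lam E n p‖ < ‖trT α lam E n (p + 1)‖ := by
      intro p
      induction p with
      | zero => intro h; rw [trT_zero]; exact h0.trans_lt h
      | succ p ihp =>
        intro h
        rcases le_or_gt ‖trT α lam E n (p + 1)‖ 2 with h' | h'
        · exact h'.trans_lt h
        · exact cheb_growth hX (trT_rec n) p (ihp h')
    have hY' : 2 < ‖trT α lam E n (a + 1)‖ := by
      rw [show n + 1 + 1 = n + 2 from rfl, trX_add_two, ha] at hY; exact hY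
    exact hE _ (escapes_succ_of ha hX hY' (key a hY'))

/-- A trace larger than `2` has its neighbour and the mixed trace at most `2` in modulus, and the
Fricke–Vogt invariant then bounds it. -/
lemma trace_bound (hα0 : 0 < α) (hα1 : α < 1) (hirr : Irrational α)
    (hE : ∀ n, ¬ Escapes α lam E n) (n : ℕ) : ‖trX α lam E (n + 1)‖ ≤ 6 + ‖lam‖ := by
  rcases le_or_gt ‖trX α lam E (n + 1)‖ 2 with h | h
  · linarith [norm_nonneg lam]
  have h0 : ‖trX α lam E n‖ ≤ 2 := by
    by_contra hc; push Not at hc; exact not_two_large hα0 hα1 hirr hE n ⟨hc, h⟩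
  have h1 : ‖trT α lam E n 1‖ ≤ 2 := by
    by_contra hc; push Not at hc; exact hE n ⟨h, hc, h0.trans_lt hc⟩
  have hinv := invariant (α := α) (lam := lam) (E := E) n
  set x := trX α lam E (n + 1)
  set y := trX α lam E n
  set z := trT α lam E n 1
  have e : x ^ 2 = 4 + lam ^ 2 - y ^ 2 - z ^ 2 + x * y * z := by linear_combination hinv
  have b : ‖x‖ ^ 2 ≤ 4 + ‖lam‖ ^ 2 + ‖y‖ ^ 2 + ‖z‖ ^ 2 + ‖x‖ * ‖y‖ * ‖z‖ := by
    have := congrArg norm e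
    rw [norm_pow] at this
    rw [this]
    refine (norm_add_le _ _).trans (add_le_add ((norm_sub_le _ _).trans (add_le_add
      ((norm_sub_le _ _).trans (add_le_add ((norm_add_le _ _).trans ?_) ?_)) ?_)) ?_) <;> simp
  have hy : ‖y‖ ^ 2 ≤ 4 := by nlinarith [norm_nonneg y]
  have hz : ‖z‖ ^ 2 ≤ 4 := by nlinarith [norm_nonneg z]
  have hyz : ‖y‖ * ‖z‖ ≤ 4 := by nlinarith [norm_nonneg y, norm_nonneg z]
  have hxyz : ‖x‖ * ‖y‖ * ‖z‖ ≤ ‖x‖ * 4 := by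
    rw [mul_assoc]; exact mul_le_mul_of_nonneg_left hyz (norm_nonneg x)
  by_contra hc
  push Not at hc
  nlinarith [norm_nonneg lam]

lemma continuous_stdM (α : ℝ) (lam : ℂ) (n : ℕ) :
    Continuous (fun E => stdM α lam E n) ∧ Continuous (fun E => stdM α lam E (n + 1)) := by
  induction n with
  | zero =>
    refine ⟨continuous_const, ?_⟩
    refine continuous_matrix fun i j => ?_
    fin_cases i <;> fin_cases j <;> simp [stdM, tm] <;> fun_prop
  | succ n ih => exact ⟨ih.2, by simp only [stdM]; exact ih.1.mul (ih.2.pow _)⟩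

lemma isOpen_escapes (α : ℝ) (lam : ℂ) (n : ℕ) : IsOpen {E | Escapes α lam E n} := by
  have c0 : Continuous fun E => ‖trX α lam E n‖ := (continuous_stdM α lam n).1.matrix_trace.norm
  have c1 : Continuous fun E => ‖trX α lam E (n + 1)‖ :=
    (continuous_stdM α lam n).2.matrix_trace.norm
  have c2 : Continuous fun E => ‖trT α lam E n 1‖ :=
    ((continuous_stdM α lam n).1.mul ((continuous_stdM α lam n).2.pow 1)).matrix_trace.norm
  exact (isOpen_lt continuous_const c1).inter
    ((isOpen_lt continuous_const c2).inter (isOpen_lt c0 c2))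

end TraceMap

/-! ### Standard words inside the Sturmian sequences -/

section Words

variable {α : ℝ} {lam E : ℂ}

/-- `cfQ` as a natural number, the length of a standard word. -/
noncomputable def cfL (α : ℝ) (n : ℕ) : ℕ := (cfQ α n).toNat

lemma cfL_cast (α : ℝ) (n : ℕ) : (cfL α n : ℤ) = cfQ α n :=
  Int.toNat_of_nonneg (cfQ_nonneg α n).1

lemma cfL_add_two (α : ℝ) (n : ℕ) :
    cfL α (n + 2) = cfa α (n + 1) * cfL α (n + 1) + cfL α n := by
  zify
  rw [cfL_cast, cfL_cast, cfL_cast, cfQ]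

lemma pot_zero_periodic (hα0 : 0 < α) (hα1 : α < 1) (hirr : Irrational α)
    (n : ℕ) (k : ℤ) (hk1 : 1 ≤ k) (hk2 : k + 1 < cfQ α (n + 2)) :
    pot α 0 (k + cfQ α (n + 1)) = pot α 0 k := by
  unfold pot
  have h1 := flr_zero_periodic hα0 hα1 hirr n k hk1 (by omega)
  have h2 := flr_zero_periodic hα0 hα1 hirr n (k + 1) (by omega) hk2
  rw [h1, show k + cfQ α (n + 1) + 1 = k + 1 + cfQ α (n + 1) by ring, h2]
  ring

lemma flr_zero_one (hα0 : 0 < α) (hα1 : α < 1) : flr α 0 1 = 0 := by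
  unfold flr; rw [Int.floor_eq_iff]; constructor <;> push_cast <;> linarith

/-- One step of the word recursion: the head of the word of length `q_{n+2}` is a power, so only
its tail has to be identified. -/
lemma prodT_step (hα0 : 0 < α) (hα1 : α < 1) (hirr : Irrational α) (n : ℕ)
    (h1 : stdM α lam E (n + 2) = prodT lam E (pot α 0) 1 (cfL α (n + 2)))
    (htail : stdM α lam E (n + 1)
      = prodT lam E (pot α 0) (1 + (cfa α (n + 2) * cfL α (n + 2) : ℕ)) (cfL α (n + 1))) :
    stdM α lam E (n + 3) = prodT lam E (pot α 0) 1 (cfL α (n + 3)) := by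
  rw [cfL_add_two α (n + 1), prodT_add, ← htail, prodT_pow, ← h1]
  · rfl
  · intro i hi
    have hm := cfL_cast α (n + 2)
    have hn := cfL_cast α (n + 1)
    have hl := cfL_cast α (n + 3)
    have p1 := cfQ_pos hα0 hα1 hirr n
    have p2 := cfQ_pos hα0 hα1 hirr (n + 1)
    have e := cfL_add_two α (n + 1)
    rw [hm]
    apply pot_zero_periodic hα0 hα1 hirr (n + 1) _ (by omega)
    rw [← hl]
    zify at hi e
    rw [e]
    linarith

/-- The sequence with phase `0` begins, from site `1` on, with every standard word of positive
level. -/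
lemma stdM_eq_prodT (hα0 : 0 < α) (hα1 : α < 1) (hirr : Irrational α) (n : ℕ) :
    stdM α lam E (n + 2) = prodT lam E (pot α 0) 1 (cfL α (n + 2)) ∧
    stdM α lam E (n + 3) = prodT lam E (pot α 0) 1 (cfL α (n + 3)) := by
  have hf1 := flr_zero_one hα0 hα1
  induction n with
  | zero =>
    have hQ2 : cfQ α 2 = cfa α 1 := by simp [cfQ]
    have hQ3 : cfQ α 3 = cfa α 2 * cfQ α 2 + 1 := by simp [cfQ]
    have hP2 : cfP α 2 = 1 := by simp [cfP]
    have hP3 : cfP α 3 = cfa α 2 := by simp [cfP]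
    have ha1 := cfa_pos hα0 hα1 hirr 0
    have ha2 := cfa_pos hα0 hα1 hirr 1
    have q2 := cfQ_pos hα0 hα1 hirr 1
    have l23 := cfQ_succ_lt hα0 hα1 hirr 0
    have l34 := cfQ_succ_lt hα0 hα1 hirr 1
    norm_num at ha1 ha2 q2 l23 l34
    obtain ⟨a, ha⟩ : ∃ a, cfa α 1 = a + 1 := ⟨cfa α 1 - 1, by omega⟩
    have hz : ∀ i : ℕ, i ≤ a → flr α 0 (1 + i) = 0 := by
      intro i
      induction i with
      | zero => intro _; simpa using hf1
      | succ i ih =>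
        intro hi
        have := flr_zero_periodic hα0 hα1 hirr 0 (1 + i) (by omega)
          (by norm_num; rw [hQ2, ha]; push_cast; omega)
        simp only [cfQ, cfP, add_zero] at this
        push_cast
        rw [← add_assoc, this, ih (by omega)]
    have base : stdM α lam E 2 = prodT lam E (pot α 0) 1 (cfL α 2) := by
      have hL : cfL α 2 = a + 1 := by
        zify; rw [cfL_cast, hQ2, ha]; push_cast; ring
      have hlast : pot α 0 (1 + (a : ℕ)) = 1 := by
        unfold pot
        have := flr_zero_periodic hα0 hα1 hirr 1 1 le_rfl (by norm_num; omega)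
        norm_num [hP2, hf1] at this
        rw [hz a le_rfl, show 1 + (a : ℤ) + 1 = 1 + cfQ α 2 by rw [hQ2, ha]; push_cast; ring, this,
          sub_zero]
      have hfirst : prodT lam E (pot α 0) 1 a = tm lam E 0 ^ a := by
        have : prodT lam E (pot α 0) 1 a = prodT lam E (fun _ => 0) 1 a := by
          apply prodT_congr
          intro i hi
          unfold pot
          have := hz (i + 1) hi
          push_cast at this
          rw [hz i hi.le, add_assoc, this]; rfl
        rw [this]
        clear this hz hlast hL ha
        induction a with
        | zero => simp [prodT]
        | succ a ih => rw [prodT, ih, pow_succ']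
      rw [hL, prodT, hlast, hfirst]
      rw [show stdM α lam E 2 = stdM α lam E 0 * stdM α lam E 1 ^ cfa α 1 from rfl, ha, pow_succ',
        ← Matrix.mul_assoc]
      congr 1
      simp only [stdM, tm]
      ext i j
      fin_cases i <;> fin_cases j <;> simp [Matrix.mul_apply, Fin.sum_univ_two]
      ring
    refine ⟨base, prodT_step hα0 hα1 hirr 0 base ?_⟩
    have hL1 : cfL α 1 = 1 := by zify; rw [cfL_cast]; simp [cfQ]
    have hlin : ∀ b : ℕ, b ≤ cfa α 2 → flr α 0 (1 + b * cfQ α 2) = b := by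
      intro b
      induction b with
      | zero => intro _; simpa using hf1
      | succ b ih =>
        intro hb
        have := flr_zero_periodic hα0 hα1 hirr 1 (1 + b * cfQ α 2) (by nlinarith)
          (by norm_num; rw [hQ3]
              have : ((b : ℤ) + 1) ≤ cfa α 2 := by exact_mod_cast hb
              nlinarith)
        norm_num [hP2] at this
        rw [ih (by omega)] at this
        push_cast
        rw [show 1 + ((b : ℤ) + 1) * cfQ α 2 = 1 + b * cfQ α 2 + cfQ α 2 by ring]
        exact this
    norm_num [hL1, prodT]
    have : pot α 0 (1 + (cfa α 2 : ℤ) * (cfL α 2 : ℤ)) = 0 := by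
      unfold pot
      rw [cfL_cast, hlin _ le_rfl]
      have := flr_zero_periodic hα0 hα1 hirr 2 1 le_rfl (by norm_num; omega)
      norm_num [hP3, hf1] at this
      rw [show 1 + (cfa α 2 : ℤ) * cfQ α 2 + 1 = 1 + cfQ α 3 by rw [hQ3]; ring, this, sub_self]
    rw [this, stdM]
  | succ n ih =>
    refine ⟨ih.2, prodT_step hα0 hα1 hirr (n + 1) ih.2 ?_⟩
    rw [show n + 1 + 1 = n + 2 from rfl, show n + 1 + 2 = n + 3 from rfl, ih.1]
    have hm := cfL_cast α (n + 3)
    have hn := cfL_cast α (n + 2)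
    have hl : cfQ α (n + 4) = cfa α (n + 3) * cfQ α (n + 3) + cfQ α (n + 2) := rfl
    have p1 := cfQ_pos hα0 hα1 hirr (n + 1)
    have l23 := cfQ_succ_lt hα0 hα1 hirr n
    simp only [add_assoc] at p1
    norm_num at p1
    apply prodT_congr
    intro i hi
    have hi' : (i : ℤ) + 1 ≤ cfQ α (n + 2) := by rw [← hn]; exact_mod_cast hi
    have key : ∀ b : ℕ, b ≤ cfa α (n + 3) →
        pot α 0 (1 + i + b * cfQ α (n + 3)) = pot α 0 (1 + i) := by
      intro b
      induction b with
      | zero => intro _; simp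
      | succ b ihb =>
        intro hb
        have hb' : ((b : ℤ) + 1) ≤ cfa α (n + 3) := by exact_mod_cast hb
        have := pot_zero_periodic hα0 hα1 hirr (n + 2) (1 + i + b * cfQ α (n + 3))
          (by nlinarith) (by simp only [add_assoc]; norm_num; rw [hl]; nlinarith)
        rw [← ihb (by omega), ← this]
        congr 1; push_cast; ring
    rw [← key _ le_rfl, ← hm]
    congr 1; push_cast; ring

/-- Over a window of length `q_{n+1}` on which the staircase rises by `p_{n+1}`, the Sturmian
transfer matrix has the trace of the standard one, whatever the phase. -/
lemma trace_pot_window (hα0 : 0 < α) (hα1 : α < 1) (hirr : Irrational α) (θ : ℝ) (n : ℕ) (s : ℤ)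
    (hs : flr α θ (s + cfQ α (n + 2)) = flr α θ s + cfP α (n + 2)) :
    (prodT lam E (pot α θ) s (cfL α (n + 2))).trace = trX α lam E (n + 2) := by
  have hL := cfL_cast α (n + 2)
  have q2 := cfQ_pos hα0 hα1 hirr (n + 1)
  have l := cfQ_succ_lt hα0 hα1 hirr n
  simp only [add_assoc] at q2
  norm_num at q2
  have hpos : 0 < cfL α (n + 2) := by omega
  have hcop := cf_coprime α (n + 2)
  have hε := cfQ_mul_abs_cfD_lt_one hα0 hα1 hirr (n + 1)
  have hLR : (cfL α (n + 2) : ℝ) = cfQ α (n + 2) := by exact_mod_cast hL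
  have hε' : (cfL α (n + 2) : ℝ) * |(cfL α (n + 2) : ℝ) * α - cfP α (n + 2)| < 1 := by
    rw [hLR]; exact hε
  rw [← hL] at hcop hs
  have h0 := flr_zero_periodic hα0 hα1 hirr (n + 1) 1 le_rfl
    (by simp only [add_assoc]; norm_num; omega)
  simp only [add_assoc] at h0
  norm_num at h0
  rw [← hL] at h0
  rw [trace_window hpos hcop hε' hs, trX, (stdM_eq_prodT hα0 hα1 hirr n).1,
    trace_window hpos hcop hε' h0]

end Words

/-! ### Periodic approximation -/

section Cyclic

open Matrix

/-- A Hermitian matrix has an eigenvalue close to `E` if it has an approximate eigenvector. -/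
lemma exists_near_eigenvalue {n : Type*} [Fintype n] [DecidableEq n] [Nonempty n]
    (A : Matrix n n ℂ) (hA : A.IsHermitian) (E : ℂ) (x : n → ℂ) :
    ∃ (E' : ℝ) (w : n → ℂ), w ≠ 0 ∧ A *ᵥ w = (E' : ℂ) • w ∧
      ‖(E' : ℂ) - E‖ ^ 2 * ∑ i, ‖x i‖ ^ 2 ≤ ∑ i, ‖(A *ᵥ x) i - E * x i‖ ^ 2 := by
  obtain ⟨i₀, hi₀⟩ := Finite.exists_min fun i => ‖((hA.eigenvalues i : ℝ) : ℂ) - E‖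
  set b := hA.eigenvectorBasis
  refine ⟨hA.eigenvalues i₀, (b i₀).ofLp, ?_, ?_, ?_⟩
  · intro h
    have : b i₀ = 0 := by ext j; simpa using congrFun h j
    exact b.toBasis.ne_zero i₀ (by simpa using this)
  · have := hA.mulVec_eigenvectorBasis i₀
    rw [this]; ext j; simp [b]
  · have hsym := Matrix.isSymmetric_toEuclideanLin_iff.2 hA
    set X : EuclideanSpace ℂ n := WithLp.toLp 2 x
    set Y : EuclideanSpace ℂ n := WithLp.toLp 2 (fun i => (A *ᵥ x) i - E * x i)
    have hY : Y = Matrix.toEuclideanLin A X - E • X := by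
      ext i; simp [Y, X, Matrix.toLpLin_apply]
    have hTb : ∀ i, Matrix.toEuclideanLin A (b i) = ((hA.eigenvalues i : ℝ) : ℂ) • b i := by
      intro i
      have := hA.mulVec_eigenvectorBasis i
      ext j
      simpa [Matrix.toLpLin_apply] using congrFun this j
    have hin : ∀ i, inner ℂ (b i) Y = (((hA.eigenvalues i : ℝ) : ℂ) - E) * inner ℂ (b i) X := by
      intro i
      rw [hY, inner_sub_right, inner_smul_right, ← hsym, hTb, inner_smul_left]
      simp; ring
    have e1 : ∑ i, ‖x i‖ ^ 2 = ‖X‖ ^ 2 := by rw [EuclideanSpace.norm_sq_eq]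
    have e2 : ∑ i, ‖(A *ᵥ x) i - E * x i‖ ^ 2 = ‖Y‖ ^ 2 := by rw [EuclideanSpace.norm_sq_eq]
    rw [e1, e2, ← b.sum_sq_norm_inner_right X, ← b.sum_sq_norm_inner_right Y, Finset.mul_sum]
    refine Finset.sum_le_sum fun i _ => ?_
    rw [hin, norm_mul, mul_pow]
    have := hi₀ i
    gcongr

/-- The Schrödinger matrix on the cycle of length `q` with diagonal `V`. -/
def cycA (q : ℕ) (V : ZMod q → ℝ) : Matrix (ZMod q) (ZMod q) ℂ := fun i j =>
  (if j = i + 1 then 1 else 0) + (if j = i - 1 then 1 else 0) + (if j = i then (V i : ℂ) else 0)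

lemma cycA_hermitian (q : ℕ) (V : ZMod q → ℝ) : (cycA q V).IsHermitian := by
  ext i j
  simp only [Matrix.conjTranspose_apply, cycA]
  have h1 : (i = j + 1) ↔ (j = i - 1) := ⟨fun h => by rw [h]; ring, fun h => by rw [h]; ring⟩
  have h2 : (i = j - 1) ↔ (j = i + 1) := ⟨fun h => by rw [h]; ring, fun h => by rw [h]; ring⟩
  simp only [h1, h2]
  by_cases h : j = i
  · subst h
    simp only [if_true, star_add, apply_ite (star : ℂ → ℂ), star_one, star_zero,
      Complex.star_def, Complex.conj_ofReal]
    ring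
  · have h' : ¬ i = j := fun e => h e.symm
    simp only [h, h', if_false, star_add, apply_ite (star : ℂ → ℂ), star_one, star_zero]
    ring

lemma cycA_mulVec (q : ℕ) [NeZero q] (V : ZMod q → ℝ) (x : ZMod q → ℂ) (i : ZMod q) :
    (cycA q V *ᵥ x) i = x (i + 1) + x (i - 1) + V i * x i := by
  simp [Matrix.mulVec, dotProduct, cycA, add_mul, Finset.sum_add_distrib]

/-- An eigenvalue of the cyclic Schrödinger matrix is an energy of trace `2`. -/
lemma trace_eq_two_of_cyc (lam : ℝ) (g : ℤ → ℤ) (s : ℤ) (q : ℕ) [NeZero q] (E : ℂ)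
    (w : ZMod q → ℂ) (hw : w ≠ 0)
    (h : cycA q (fun i => lam * g (s + i.val)) *ᵥ w = E • w) :
    (prodT lam E g s q).trace = 2 := by
  set W : ℤ → ℂ := fun k => w ((k - s : ℤ) : ZMod q) with hW
  have hsol : ∀ i : ℕ, i < q → W (s + i + 1) + W (s + i - 1) + lam * g (s + i) * W (s + i)
      = E * W (s + i) := by
    intro i hi
    have := congrFun h (i : ZMod q)
    rw [cycA_mulVec, ZMod.val_natCast_of_lt hi] at this
    have e0 : s + (i : ℤ) - s = i := by ring
    have e1 : s + (i : ℤ) + 1 - s = i + 1 := by ring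
    have e2 : s + (i : ℤ) - 1 - s = i - 1 := by ring
    simp only [hW, e0, e1, e2]
    push_cast
    simpa using this
  have hper : ∀ k, W (k + q) = W k := by
    intro k
    simp only [hW]
    congr 1
    push_cast; simp
  have hmul := fun m (hm : m ≤ q) => prodT_mulVec (lam := (lam : ℂ)) (E := E) (g := g) (u := W)
    (s := s) (m := m) (fun i hi => hsol i (by omega))
  have hU : ![W s, W (s - 1)] ≠ 0 := by
    intro h0
    apply hw
    ext i
    have hm := hmul i.val (ZMod.val_lt i).le
    rw [h0, Matrix.mulVec_zero] at hm
    have := congrFun hm 0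
    simp only [hW] at this
    simpa using this.symm
  have hfix : (prodT lam E g s q - 1) *ᵥ ![W s, W (s - 1)] = 0 := by
    rw [Matrix.sub_mulVec, Matrix.one_mulVec, hmul q le_rfl, hper,
      show s + (q : ℤ) - 1 = s - 1 + q by ring, hper, sub_self]
  have hdet := Matrix.exists_mulVec_eq_zero_iff.1 ⟨_, hU, hfix⟩
  have hd := det_prodT (lam := (lam : ℂ)) (E := E) g s q
  rw [Matrix.det_fin_two] at hdet hd
  rw [Matrix.trace_fin_two]
  simp at hdet
  linear_combination hd - hdet

/-- A solution restricted to a window of length `q`, closed up to a cycle, is an approximate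
eigenvector whose error lives at the two ends of the window. -/
lemma exists_trace_two_near (lam : ℝ) (g : ℤ → ℤ) (E : ℂ) (u : ℤ → ℂ)
    (hu : ∀ k : ℤ, u (k + 1) + u (k - 1) + lam * g k * u k = E * u k)
    (s : ℤ) (q : ℕ) (hq : 2 ≤ q) (k₀ : ℤ) (hk1 : s ≤ k₀) (hk2 : k₀ < s + q) :
    ∃ E' : ℝ, (prodT lam E' g s q).trace = 2 ∧
      ‖(E' : ℂ) - E‖ ^ 2 * ‖u k₀‖ ^ 2
        ≤ ‖u (s + q - 1) - u (s - 1)‖ ^ 2 + ‖u s - u (s + q)‖ ^ 2 := by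
  have : NeZero q := ⟨by omega⟩
  have : Fact (1 < q) := ⟨by omega⟩
  set V : ZMod q → ℝ := fun i => lam * g (s + i.val) with hV
  set x : ZMod q → ℂ := fun i => u (s + i.val) with hx
  obtain ⟨E', w, hw, hAw, hE'⟩ := exists_near_eigenvalue (cycA q V) (cycA_hermitian q V) E x
  refine ⟨E', trace_eq_two_of_cyc lam g s q E' w hw hAw, ?_⟩
  have hxn : ∀ i : ℕ, i < q → x (i : ZMod q) = u (s + i) := by
    intro i hi; simp only [hx]; rw [ZMod.val_natCast_of_lt hi]
  have hle : ‖u k₀‖ ^ 2 ≤ ∑ i, ‖x i‖ ^ 2 := by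
    have h1 : x ((k₀ - s).toNat : ZMod q) = u k₀ := by
      rw [hxn _ (by omega)]; congr 1; omega
    rw [← h1]
    exact Finset.single_le_sum (f := fun i => ‖x i‖ ^ 2) (fun i _ => by positivity)
      (Finset.mem_univ _)
  refine (mul_le_mul_of_nonneg_left hle (by positivity)).trans (hE'.trans ?_)
  have hval : ∀ i : ℕ, i < q → (cycA q V *ᵥ x) i - E * x i
      = x ((i : ZMod q) + 1) - u (s + i + 1) + (x ((i : ZMod q) - 1) - u (s + i - 1)) := by
    intro i hi
    rw [cycA_mulVec, hxn i hi, hV]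
    simp only
    rw [ZMod.val_natCast_of_lt hi]
    push_cast
    linear_combination hu (s + i)
  have hfirst : (cycA q V *ᵥ x) 0 - E * x 0 = u (s + q - 1) - u (s - 1) := by
    have h := hval 0 (by omega)
    have h1 := hxn 1 (by omega)
    have h2 := hxn (q - 1) (by omega)
    have h3 : ((q - 1 : ℕ) : ZMod q) = -1 := by
      rw [Nat.cast_sub (by omega)]; simp
    rw [h3] at h2
    push_cast at h h1
    simp only [add_zero, zero_add, zero_sub] at h
    rw [h, h1, h2, Nat.cast_sub (by omega)]
    push_cast
    rw [show s + ((q : ℤ) - 1) = s + q - 1 by ring]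
    ring
  have hlast : (cycA q V *ᵥ x) (-1) - E * x (-1) = u s - u (s + q) := by
    have h := hval (q - 1) (by omega)
    have h1 := hxn 0 (by omega)
    have h2 := hxn (q - 2) (by omega)
    have h3 : ((q - 1 : ℕ) : ZMod q) = -1 := by
      rw [Nat.cast_sub (by omega)]; simp
    have h4 : ((q - 2 : ℕ) : ZMod q) = -1 - 1 := by
      rw [Nat.cast_sub (by omega)]; push_cast; simp; ring
    rw [h4] at h2
    rw [h3] at h
    rw [h, h2, Nat.cast_sub (by omega), Nat.cast_sub (by omega)]
    push_cast at h1 ⊢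
    rw [show (-1 : ZMod q) + 1 = 0 by ring, h1,
      show s + ((q : ℤ) - 1) - 1 = s + (q - 2) by ring,
      show s + ((q : ℤ) - 1) + 1 = s + q by ring]
    simp
  have hmid : ∀ i : ZMod q, i ∉ ({0, -1} : Finset (ZMod q)) →
      ‖(cycA q V *ᵥ x) i - E * x i‖ ^ 2 = 0 := by
    intro i hi
    simp only [Finset.mem_insert, Finset.mem_singleton, not_or] at hi
    have hlt := ZMod.val_lt i
    have hcast : ((i.val : ℕ) : ZMod q) = i := ZMod.natCast_zmod_val i
    have hpos : i.val ≠ 0 := by rw [Ne, ZMod.val_eq_zero]; exact hi.1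
    have hne : i.val + 1 ≠ q := by
      intro h
      apply hi.2
      have : ((i.val + 1 : ℕ) : ZMod q) = 0 := by rw [h]; simp
      push_cast at this
      rw [hcast] at this
      exact eq_neg_of_add_eq_zero_left this
    have h := hval i.val hlt
    have h1 := hxn (i.val + 1) (by omega)
    have h2 := hxn (i.val - 1) (by omega)
    rw [Nat.cast_sub (by omega), Nat.cast_sub (by omega)] at h2
    push_cast at h1 h2
    rw [hcast] at h h1 h2
    rw [h, h1, h2]
    rw [show s + ((i.val : ℤ) + 1) = s + i.val + 1 by ring,
      show s + ((i.val : ℤ) - 1) = s + i.val - 1 by ring]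
    simp
  have h01 : (0 : ZMod q) ≠ -1 := by
    intro h; exact one_ne_zero (neg_eq_zero.1 h.symm)
  rw [← Finset.sum_subset (Finset.subset_univ ({0, -1} : Finset (ZMod q)))
    (fun i _ hi => hmid i hi), Finset.sum_pair h01, hfirst, hlast]

end Cyclic

/-! ### Decaying solutions -/

section Decay

open Filter Topology

variable {α : ℝ}

lemma exists_bound_of_summable {u : ℤ → ℂ} (hu : Summable fun n : ℤ => ‖u n‖ ^ 2) {ε : ℝ}
    (hε : 0 < ε) : ∃ N : ℤ, ∀ k : ℤ, N ≤ |k| → ‖u k‖ < ε := by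
  have h := hu.tendsto_cofinite_zero
  rw [Int.cofinite_eq, tendsto_sup] at h
  have hε2 : 0 < ε ^ 2 := by positivity
  obtain ⟨a, ha⟩ := eventually_atBot.1 (h.1.eventually_lt_const hε2)
  obtain ⟨b, hb⟩ := eventually_atTop.1 (h.2.eventually_lt_const hε2)
  refine ⟨max (-a) b, fun k hk => ?_⟩
  refine lt_of_pow_lt_pow_left₀ 2 hε.le ?_
  rcases le_total 0 k with h0 | h0
  · rw [abs_of_nonneg h0] at hk
    exact hb k ((le_max_right _ _).trans hk)
  · rw [abs_of_nonpos h0] at hk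
    exact ha k (by linarith [le_max_left (-a) b])

/-- The energy of a nonzero square-summable solution never escapes. Closing up long windows to
cycles produces energies near `E` at which some late trace equals `2`, whereas an escape at `E`
persists in a neighbourhood and keeps all late traces above `2`. -/
lemma not_escapes (hα0 : 0 < α) (hα1 : α < 1) (hirr : Irrational α) (θ : ℝ) (lam : ℝ) (E : ℂ)
    (u : ℤ → ℂ) (hu : Summable fun n : ℤ => ‖u n‖ ^ 2)
    (heq : ∀ k : ℤ, u (k + 1) + u (k - 1) + lam * pot α θ k * u k = E * u k)
    (k₀ : ℤ) (hk₀ : u k₀ ≠ 0) (n : ℕ) : ¬ Escapes α lam E n := by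
  intro hesc
  obtain ⟨δ, hδ, hball⟩ := Metric.isOpen_iff.1 (isOpen_escapes α lam n) E hesc
  have hpos : 0 < ‖u k₀‖ := norm_pos_iff.2 hk₀
  obtain ⟨N, hN⟩ := exists_bound_of_summable hu (ε := δ * ‖u k₀‖ / 4) (by positivity)
  obtain ⟨m, hm⟩ : ∃ m : ℕ, m = n + 2 * N.toNat + 2 * k₀.natAbs + 20 := ⟨_, rfl⟩
  have hQ := cfQ_ge hα0 hα1 hirr m
  have hL := cfL_cast α (m + 2)
  have hQ3 := cfQ_succ_lt hα0 hα1 hirr m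
  obtain ⟨h, hh⟩ : ∃ h : ℤ, h = cfQ α (m + 2) / 2 := ⟨_, rfl⟩
  obtain ⟨s, hs1, hs2, hs⟩ : ∃ s : ℤ, -h ≤ s ∧ s ≤ -h + 1 ∧
      flr α θ (s + cfQ α (m + 2)) = flr α θ s + cfP α (m + 2) := by
    by_contra hc
    push Not at hc
    have := defect_separated hα0 hα1 hirr θ (m + 1) (-h) (-h + 1) (by omega)
      (hc _ le_rfl (by omega)) (hc _ (by omega) le_rfl)
    have e : |(-h) - (-h + 1)| = 1 := by
      rw [show (-h) - (-h + 1) = -1 by ring]; simp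
    rw [e] at this
    have e2 : cfQ α (m + 1 + 2) = cfQ α (m + 3) := rfl
    omega
  obtain ⟨E', htr, hE'⟩ := exists_trace_two_near lam (pot α θ) E u heq s (cfL α (m + 2))
    (by omega) k₀ (by omega) (by omega)
  rw [trace_pot_window hα0 hα1 hirr θ m s hs] at htr
  rw [hL] at hE'
  have b1 := hN (s + cfQ α (m + 2) - 1) (le_abs.2 (by omega))
  have b2 := hN (s - 1) (le_abs.2 (by omega))
  have b3 := hN s (le_abs.2 (by omega))
  have b4 := hN (s + cfQ α (m + 2)) (le_abs.2 (by omega))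
  have c1 := norm_sub_le (u (s + cfQ α (m + 2) - 1)) (u (s - 1))
  have c2 := norm_sub_le (u s) (u (s + cfQ α (m + 2)))
  have hlt : ‖(E' : ℂ) - E‖ < δ := by
    by_contra hc
    push Not at hc
    have d1 : ‖u (s + cfQ α (m + 2) - 1) - u (s - 1)‖ ^ 2 ≤ (δ * ‖u k₀‖ / 2) ^ 2 := by
      gcongr; linarith
    have d2 : ‖u s - u (s + cfQ α (m + 2))‖ ^ 2 ≤ (δ * ‖u k₀‖ / 2) ^ 2 := by
      gcongr; linarith
    have d3 : δ ^ 2 * ‖u k₀‖ ^ 2 ≤ ‖(E' : ℂ) - E‖ ^ 2 * ‖u k₀‖ ^ 2 := by gcongr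
    have d4 : 0 < δ ^ 2 * ‖u k₀‖ ^ 2 := by positivity
    nlinarith
  have hesc' : Escapes α lam E' n := hball (by rwa [Metric.mem_ball, dist_eq_norm])
  have := hesc'.two_lt hα0 hα1 hirr (m := m + 1) (by omega)
  rw [htr] at this
  norm_num at this

/-- If `a_{n+3} ≥ 3`, the two values `u 0`, `u 1` are controlled by values of `u` at distance about
`q_{n+2}` or more: the potential has a square of period `q_{n+2}` starting at `1`, or ending
at `0`. -/
lemma gordon_step (hα0 : 0 < α) (hα1 : α < 1) (hirr : Irrational α) (θ : ℝ) (lam : ℝ) (E : ℂ)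
    (u : ℤ → ℂ) (heq : ∀ k : ℤ, u (k + 1) + u (k - 1) + lam * pot α θ k * u k = E * u k)
    {C ε : ℝ} (n : ℕ) (hC : ‖trX α lam E (n + 3)‖ ≤ C)
    (ha : 3 ≤ cfa α (n + 3)) (hε : ∀ k : ℤ, cfQ α (n + 3) - 1 ≤ |k| → ‖u k‖ ≤ ε) :
    ‖u 0‖ ≤ (C + 1) * ε ∧ ‖u 1‖ ≤ (C + 1) * ε := by
  obtain ⟨q, hq⟩ : ∃ q : ℤ, q = cfQ α (n + 3) := ⟨_, rfl⟩
  have hL : (cfL α (n + 3) : ℤ) = q := by rw [hq, cfL_cast]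
  have hqpos : 1 ≤ q := hq ▸ cfQ_pos hα0 hα1 hirr (n + 2)
  have hq2 : 1 ≤ cfQ α (n + 2) := cfQ_pos hα0 hα1 hirr (n + 1)
  have hbig : 3 * q + 1 ≤ cfQ α (n + 4) := by
    have e : cfQ α (n + 4) = cfa α (n + 3) * q + cfQ α (n + 2) := by rw [hq]; rfl
    have : (3 : ℤ) ≤ cfa α (n + 3) := by exact_mod_cast ha
    rw [e]; nlinarith
  rw [← hq] at hε
  have hsq : ∀ s : ℤ, (∀ k, s ≤ k → k ≤ s + q →
      flr α θ (k + q) = flr α θ k + cfP α (n + 3)) →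
      u (s + 2 * q) = trX α lam E (n + 3) * u (s + q) - u s ∧
      u (s + 2 * q - 1) = trX α lam E (n + 3) * u (s + q - 1) - u (s - 1) := by
    intro s hs
    have hg := gordon_two (lam := (lam : ℂ)) (E := E) (g := pot α θ) (u := u) heq s
      (cfL α (n + 3)) (by
        intro i hi
        rw [hL]
        have h1 := hs (s + i) (by omega) (by omega)
        have h2 := hs (s + i + 1) (by omega) (by omega)
        unfold pot
        rw [show s + q + (i : ℤ) + 1 = s + i + 1 + q by ring,
          show s + q + (i : ℤ) = s + i + q by ring, h1, h2]
        ring)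
    rw [trace_pot_window hα0 hα1 hirr θ (n + 1) s
      (by have := hs s le_rfl (by omega); rwa [hq] at this), hL] at hg
    exact hg
  have hεpos : 0 ≤ ε := (norm_nonneg _).trans (hε q (le_abs.2 (by omega)))
  -- the trace identities of a square express each end value through the other two
  have hfin : ∀ x y z : ℂ, x = trX α lam E (n + 3) * y - z → ‖y‖ ≤ ε → ‖z‖ ≤ ε →
      ‖x‖ ≤ (C + 1) * ε := by
    intro x y z hx hy hz
    rw [hx]
    refine (norm_sub_le _ _).trans ?_
    rw [norm_mul]
    have : ‖trX α lam E (n + 3)‖ * ‖y‖ ≤ C * ε :=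
      mul_le_mul hC hy (norm_nonneg _) ((norm_nonneg _).trans hC)
    linarith
  by_cases hR : ∀ k, 1 ≤ k → k ≤ 1 + q → flr α θ (k + q) = flr α θ k + cfP α (n + 3)
  · obtain ⟨h1, h0⟩ := hsq 1 hR
    constructor
    · refine hfin _ (u (1 + q - 1)) (u (1 + 2 * q - 1)) ?_ (hε _ (le_abs.2 (by omega)))
        (hε _ (le_abs.2 (by omega)))
      rw [h0]; norm_num
    · refine hfin _ (u (1 + q)) (u (1 + 2 * q)) ?_ (hε _ (le_abs.2 (by omega)))
        (hε _ (le_abs.2 (by omega)))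
      rw [h1]; ring
  · push Not at hR
    obtain ⟨k, hk1, hk2, hk⟩ := hR
    obtain ⟨h1, h0⟩ := hsq (1 - 2 * q) (by
      intro k' hk1' hk2'
      by_contra hk'
      have := defect_separated hα0 hα1 hirr θ (n + 2) k k' (by omega)
        (by rw [hq] at hk; exact hk) (by rw [hq] at hk'; exact hk')
      have e : cfQ α (n + 2 + 2) = cfQ α (n + 4) := rfl
      rw [abs_of_nonneg (by omega)] at this
      omega)
    rw [show 1 - 2 * q + 2 * q = 1 by ring] at h1 h0
    constructor
    · exact hfin _ _ _ h0 (hε _ (le_abs.2 (by omega))) (hε _ (le_abs.2 (by omega)))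
    · exact hfin _ _ _ h1 (hε _ (le_abs.2 (by omega))) (hε _ (le_abs.2 (by omega)))

lemma eq_zero_of_two_zeros {lam E : ℂ} {g : ℤ → ℤ} {u : ℤ → ℂ}
    (heq : ∀ k : ℤ, u (k + 1) + u (k - 1) + lam * g k * u k = E * u k)
    (h0 : u 0 = 0) (h1 : u 1 = 0) : u = 0 := by
  have key : ∀ k : ℤ, u k = 0 ∧ u (k + 1) = 0 := by
    intro k
    induction k using Int.induction_on with
    | zero => exact ⟨h0, h1⟩
    | succ i ih =>
      refine ⟨ih.2, ?_⟩
      have := heq (i + 1)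
      rw [ih.2, add_sub_cancel_right, ih.1] at this
      simpa using this
    | pred i ih =>
      have := heq (-i)
      rw [ih.2, ih.1] at this
      exact ⟨by simpa using this, by simpa using ih.1⟩
  funext k
  exact (key k).1

end Decay

/-- Absence of eigenvalues for Sturmian Schrödinger operators when
`limsup aₙ ≥ 3`: every square-summable solution of `H_{λ,α,θ} u = E u` vanishes. -/
theorem absence_of_eigenvalues_limsup_ge_three
    (α : ℝ) (hα0 : 0 < α) (hα1 : α < 1) (hirr : Irrational α)
    (hlim : 3 ≤ Filter.atTop.limsup (fun n : ℕ => (cfa α n : ℕ∞)))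
    (lam : ℝ) (hlam : lam ≠ 0) (θ : ℝ) (hθ0 : 0 ≤ θ) (hθ1 : θ < 1)
    (E : ℂ) (u : ℤ → ℂ)
    (hu : Summable fun n : ℤ => ‖u n‖ ^ 2)
    (heq : ∀ n : ℤ, u (n + 1) + u (n - 1)
      + (lam : ℂ) * (if sturmian α θ n then 1 else 0) * u n = E * u n) :
    u = 0 := by
  have heq' : ∀ k : ℤ, u (k + 1) + u (k - 1) + (lam : ℂ) * pot α θ k * u k = E * u k := by
    intro k
    rw [← sturmian_eq_pot hα0 hα1 θ k]
    exact heq k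
  by_contra hne
  obtain ⟨k₀, hk₀⟩ := Function.ne_iff.1 hne
  have hE := not_escapes hα0 hα1 hirr θ lam E u hu heq' k₀ hk₀
  have hfreq : ∃ᶠ n in Filter.atTop, (2 : ℕ∞) < (cfa α n : ℕ∞) :=
    Filter.frequently_lt_of_lt_limsup (by isBoundedDefault) (lt_of_lt_of_le (by decide) hlim)
  have hC0 : 0 < 6 + ‖(lam : ℂ)‖ + 1 := by positivity
  have hsmall : ∀ η : ℝ, 0 < η → ‖u 0‖ ≤ η ∧ ‖u 1‖ ≤ η := by
    intro η hη
    obtain ⟨N, hN⟩ := exists_bound_of_summable hu (ε := η / (6 + ‖(lam : ℂ)‖ + 1)) (by positivity)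
    obtain ⟨n, hn, hn2⟩ := Filter.frequently_atTop.1 hfreq (N.toNat + 3)
    obtain ⟨m, rfl⟩ : ∃ m, n = m + 3 := ⟨n - 3, by omega⟩
    have ha : 3 ≤ cfa α (m + 3) := by
      have : 2 < cfa α (m + 3) := by exact_mod_cast hn2
      omega
    have hQ : ((m + 1 : ℕ) : ℤ) + 1 ≤ cfQ α (m + 3) := cfQ_ge hα0 hα1 hirr (m + 1)
    have := gordon_step hα0 hα1 hirr θ lam E u heq' m (trace_bound hα0 hα1 hirr hE (m + 2)) ha
      (fun k hk => (hN k (by push_cast at hQ; omega)).le)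
    rwa [mul_div_cancel₀ _ hC0.ne'] at this
  apply hne
  refine eq_zero_of_two_zeros heq' ?_ ?_
  · exact norm_le_zero_iff.1 (le_of_forall_pos_le_add fun η hη => by
      simpa using (hsmall η hη).1)
  · exact norm_le_zero_iff.1 (le_of_forall_pos_le_add fun η hη => by
      simpa using (hsmall η hη).2)
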